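/- The reduced crossed product 𝒞 is closed under the Hadamard product: for all X, Y ∈ 𝒞, the operator X ⋆ Y again belongs to 𝒞. -/

import Mathlib

set_option synthInstance.maxHeartbeats 1000000
set_option maxHeartbeats 1000000

open scoped InnerProductSpace
open ContinuousLinearMap

noncomputable section

/-- `l2 G H` is the Hilbert space `ℓ²(G,H)` of square-summable `H`-valued functions on `G`. -/
abbrev l2 (G : Type) (H : Type) [NormedAddCommGroup H] : Type := lp (fun _ : G => H) 2

/-- The Hadamard product `X ⋆ Y := V* ∘ ρ(X) ∘ F ∘ ρ(Y) ∘ V`. -/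
def hadamard {H : Type} [NormedAddCommGroup H] [InnerProductSpace ℂ H] [CompleteSpace H]
    {G : Type}
    (ρ : (l2 G H →L[ℂ] l2 G H) → (l2 G (l2 G H) →L[ℂ] l2 G (l2 G H)))
    (V : l2 G H →L[ℂ] l2 G (l2 G H))
    (F : l2 G (l2 G H) →L[ℂ] l2 G (l2 G H))
    (X Y : l2 G H →L[ℂ] l2 G H) : l2 G H →L[ℂ] l2 G H :=
  adjoint V ∘L (ρ X ∘L (F ∘L (ρ Y ∘L V)))


section helpers
variable {H : Type} [NormedAddCommGroup H] [InnerProductSpace ℂ H] [CompleteSpace H]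
  {G : Type}

theorem hd_rho_bound
    (ρ : (l2 G H →L[ℂ] l2 G H) → (l2 G (l2 G H) →L[ℂ] l2 G (l2 G H)))
    (hρ : ∀ (X : l2 G H →L[ℂ] l2 G H) (Ξ : l2 G (l2 G H)) (g : G),
      (ρ X Ξ : ∀ _ : G, l2 G H) g = X ((Ξ : ∀ _ : G, l2 G H) g))
    (X : l2 G H →L[ℂ] l2 G H) : ‖ρ X‖ ≤ ‖X‖ := by
  refine ContinuousLinearMap.opNorm_le_bound _ (norm_nonneg _) fun Ξ => ?_
  refine lp.norm_le_of_forall_sum_le (by norm_num) (by positivity) fun s => ?_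
  have h1 := lp.sum_rpow_le_norm_rpow (p := 2) (by norm_num) Ξ s
  rw [Real.mul_rpow (norm_nonneg _) (norm_nonneg _)]
  calc ∑ i ∈ s, ‖(ρ X Ξ : ∀ _ : G, l2 G H) i‖ ^ (2 : ENNReal).toReal
      ≤ ∑ i ∈ s, ‖X‖ ^ (2 : ENNReal).toReal * ‖(Ξ : ∀ _ : G, l2 G H) i‖ ^ (2 : ENNReal).toReal := by
        refine Finset.sum_le_sum fun i _ => ?_
        rw [hρ, ← Real.mul_rpow (norm_nonneg _) (norm_nonneg _)]
        exact Real.rpow_le_rpow (norm_nonneg _) (X.le_opNorm _) (by norm_num)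
    _ ≤ _ := by
        rw [← Finset.mul_sum]
        exact mul_le_mul_of_nonneg_left h1 (by positivity)

theorem hd_rho_cont
    (ρ : (l2 G H →L[ℂ] l2 G H) → (l2 G (l2 G H) →L[ℂ] l2 G (l2 G H)))
    (hρ : ∀ (X : l2 G H →L[ℂ] l2 G H) (Ξ : l2 G (l2 G H)) (g : G),
      (ρ X Ξ : ∀ _ : G, l2 G H) g = X ((Ξ : ∀ _ : G, l2 G H) g)) :
    ∃ R : (l2 G H →L[ℂ] l2 G H) →L[ℂ] (l2 G (l2 G H) →L[ℂ] l2 G (l2 G H)), ∀ X, ρ X = R X := by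
  refine ⟨LinearMap.mkContinuous ⟨⟨ρ, ?_⟩, ?_⟩ 1 ?_, fun X => rfl⟩
  · intro X Y
    ext1 Ξ
    apply lp.ext
    funext g
    simp [hρ]
  · intro c X
    ext1 Ξ
    apply lp.ext
    funext g
    simp [hρ]
  · intro X
    simpa using hd_rho_bound ρ hρ X

theorem hd_adjV [DecidableEq G] (V : l2 G H →L[ℂ] l2 G (l2 G H))
    (hV : ∀ (ξ : l2 G H) (g : G),
      (V ξ : ∀ _ : G, l2 G H) g = lp.single 2 g ((ξ : ∀ _ : G, H) g))
    (Ξ : l2 G (l2 G H)) (g : G) :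
    (adjoint V Ξ : ∀ _ : G, H) g = ((Ξ : ∀ _ : G, l2 G H) g : ∀ _ : G, H) g := by
  refine ext_inner_left ℂ fun v => ?_
  have h1 : V (lp.single 2 g v) = lp.single 2 g (lp.single 2 g v) := by
    apply lp.ext
    funext h
    rw [hV]
    by_cases hh : h = g
    · subst hh; simp
    · simp [hh]
  have e1 := lp.inner_single_left (𝕜 := ℂ) (G := fun _ : G => H) g v (adjoint V Ξ)
  have e2 := lp.inner_single_left (𝕜 := ℂ) (G := fun _ : G => l2 G H) g (lp.single 2 g v) Ξ
  have e3 := lp.inner_single_left (𝕜 := ℂ) (G := fun _ : G => H) g v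
    ((Ξ : ∀ _ : G, l2 G H) g)
  have e4 := adjoint_inner_right V (lp.single 2 g v) Ξ
  rw [h1] at e4
  exact e1.symm.trans (e4.trans (e2.trans e3))

theorem hd_apply [DecidableEq G]
    (ρ : (l2 G H →L[ℂ] l2 G H) → (l2 G (l2 G H) →L[ℂ] l2 G (l2 G H)))
    (hρ : ∀ (X : l2 G H →L[ℂ] l2 G H) (Ξ : l2 G (l2 G H)) (g : G),
      (ρ X Ξ : ∀ _ : G, l2 G H) g = X ((Ξ : ∀ _ : G, l2 G H) g))
    (V : l2 G H →L[ℂ] l2 G (l2 G H))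
    (hV : ∀ (ξ : l2 G H) (g : G),
      (V ξ : ∀ _ : G, l2 G H) g = lp.single 2 g ((ξ : ∀ _ : G, H) g))
    (F : l2 G (l2 G H) →L[ℂ] l2 G (l2 G H))
    (X Y : l2 G H →L[ℂ] l2 G H) (ξ : l2 G H) (g : G) :
    (hadamard ρ V F X Y ξ : ∀ _ : G, H) g =
      (X ((F (ρ Y (V ξ)) : ∀ _ : G, l2 G H) g) : ∀ _ : G, H) g := by
  unfold hadamard
  rw [comp_apply, hd_adjV V hV, comp_apply, hρ]
  rfl

end helpers

theorem hadamard_stmt12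
    {H : Type} [NormedAddCommGroup H] [InnerProductSpace ℂ H] [CompleteSpace H]
    {G : Type} [Group G] [DecidableEq G]
    (𝒜 : StarSubalgebra ℂ (H →L[ℂ] H))
    (h𝒜 : IsClosed (𝒜 : Set (H →L[ℂ] H)))
    (hnd : Dense (↑(Submodule.span ℂ {v : H | ∃ A ∈ 𝒜, ∃ w : H, v = A w}) : Set H))
    (α : G → (𝒜 ≃⋆ₐ[ℂ] 𝒜))
    (hα1 : ∀ A, α 1 A = A)
    (hαmul : ∀ g h A, α (g * h) A = α g (α h A))
    (Ψ : 𝒜 → (l2 G H →L[ℂ] l2 G H))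
    (hΨ : ∀ (A : 𝒜) (ξ : l2 G H) (g : G),
      (Ψ A ξ : ∀ _ : G, H) g = ((α g⁻¹ A : 𝒜) : H →L[ℂ] H) ((ξ : ∀ _ : G, H) g))
    (L : G → (l2 G H →L[ℂ] l2 G H))
    (hL : ∀ (g : G) (ξ : l2 G H) (h : G),
      (L g ξ : ∀ _ : G, H) h = (ξ : ∀ _ : G, H) (g⁻¹ * h))
    (𝒞 : Set (l2 G H →L[ℂ] l2 G H))
    (h𝒞 : 𝒞 = ((StarAlgebra.adjoin ℂ
        (Set.range Ψ ∪ Set.range L)).topologicalClosure : Set _))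
    (ρ : (l2 G H →L[ℂ] l2 G H) → (l2 G (l2 G H) →L[ℂ] l2 G (l2 G H)))
    (hρ : ∀ (X : l2 G H →L[ℂ] l2 G H) (Ξ : l2 G (l2 G H)) (g : G),
      (ρ X Ξ : ∀ _ : G, l2 G H) g = X ((Ξ : ∀ _ : G, l2 G H) g))
    (V : l2 G H →L[ℂ] l2 G (l2 G H))
    (hV : ∀ (ξ : l2 G H) (g : G),
      (V ξ : ∀ _ : G, l2 G H) g = lp.single 2 g ((ξ : ∀ _ : G, H) g))
    (F : l2 G (l2 G H) →L[ℂ] l2 G (l2 G H))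
    (hF : ∀ (Ξ : l2 G (l2 G H)) (g h : G),
      ((F Ξ : ∀ _ : G, l2 G H) g : ∀ _ : G, H) h
        = ((Ξ : ∀ _ : G, l2 G H) h : ∀ _ : G, H) g)
    :
    ∀ X ∈ 𝒞, ∀ Y ∈ 𝒞, hadamard ρ V F X Y ∈ 𝒞 := by
  obtain ⟨R, hR⟩ := hd_rho_cont ρ hρ
  have hcont : Continuous (Function.uncurry (hadamard ρ V F)) := by
    have : Function.uncurry (hadamard ρ V F) = fun p : (l2 G H →L[ℂ] l2 G H) × (l2 G H →L[ℂ] l2 G H) =>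
        adjoint V ∘L (R p.1 ∘L (F ∘L (R p.2 ∘L V))) := by
      funext p
      simp only [Function.uncurry, hadamard, hR]
    rw [this]
    fun_prop
  set S0 := StarAlgebra.adjoin ℂ (Set.range Ψ ∪ Set.range L) with hS0
  set T : Set (l2 G H →L[ℂ] l2 G H) := Set.range (fun p : 𝒜 × G => Ψ p.1 * L p.2) with hT
  have hΨmul : ∀ A B, Ψ A * Ψ B = Ψ (A * B) := by
    intro A B
    ext1 ξ
    apply lp.ext
    funext g
    simp only [mul_apply_eq_comp, hΨ, map_mul]
    rfl
  have hLmul : ∀ g h, L g * L h = L (g * h) := by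
    intro g h
    ext1 ξ
    apply lp.ext
    funext k
    simp only [mul_apply_eq_comp, hL, mul_inv_rev, mul_assoc]
  have hΨ1 : Ψ 1 = 1 := by
    ext1 ξ
    apply lp.ext
    funext g
    rw [hΨ, map_one]
    rfl
  have hL1 : L 1 = 1 := by
    ext1 ξ
    apply lp.ext
    funext g
    rw [hL]
    simp
  have hLΨ : ∀ g A, L g * Ψ A = Ψ (α g A) * L g := by
    intro g A
    ext1 ξ
    apply lp.ext
    funext k
    simp only [mul_apply_eq_comp, hL, hΨ, ← hαmul, mul_inv_rev, inv_inv]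
  have hΨstar : ∀ A, star (Ψ A) = Ψ (star A) := by
    intro A
    rw [star_eq_adjoint]
    symm
    rw [eq_adjoint_iff]
    intro x y
    rw [lp.inner_eq_tsum, lp.inner_eq_tsum]
    congr 1
    funext g
    rw [hΨ, hΨ, map_star, StarMemClass.coe_star, star_eq_adjoint, adjoint_inner_left]
  have hLstar : ∀ g, star (L g) = L g⁻¹ := by
    intro g
    rw [star_eq_adjoint]
    symm
    rw [eq_adjoint_iff]
    intro x y
    rw [lp.inner_eq_tsum, lp.inner_eq_tsum]
    rw [← (Equiv.mulLeft g).tsum_eq (fun h => ⟪(x : ∀ _ : G, H) h, (L g y : ∀ _ : G, H) h⟫_ℂ)]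
    congr 1
    funext h
    simp [hL]
  have hΨmem : ∀ A, Ψ A ∈ S0 := fun A =>
    StarAlgebra.subset_adjoin ℂ _ (Or.inl ⟨A, rfl⟩)
  have hLmem : ∀ g, L g ∈ S0 := fun g =>
    StarAlgebra.subset_adjoin ℂ _ (Or.inr ⟨g, rfl⟩)
  have hTmul : ∀ x ∈ T, ∀ y ∈ T, x * y ∈ T := by
    rintro _ ⟨⟨A, g⟩, rfl⟩ _ ⟨⟨B, h⟩, rfl⟩
    refine ⟨(A * α g B, g * h), ?_⟩
    show Ψ (A * α g B) * L (g * h) = Ψ A * L g * (Ψ B * L h)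
    rw [← hΨmul, ← hLmul, mul_assoc, mul_assoc, ← mul_assoc (L g), hLΨ, mul_assoc]
  have hTΨ : ∀ A, Ψ A ∈ T := fun A => ⟨(A, 1), by simp [hL1]⟩
  have hTL : ∀ g, L g ∈ T := fun g => ⟨(1, g), by simp [hΨ1]⟩
  have hsub : ∀ x ∈ S0, x ∈ Submodule.span ℂ T := by
    intro x hx
    rw [hS0, ← StarSubalgebra.mem_toSubalgebra, StarAlgebra.adjoin_toSubalgebra] at hx
    induction hx using Algebra.adjoin_induction with
    | mem x hx =>
      apply Submodule.subset_span
      rcases hx with (⟨A, rfl⟩ | ⟨g, rfl⟩) | (⟨A, hA⟩ | ⟨g, hg⟩)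
      · exact hTΨ A
      · exact hTL g
      · rw [← star_star x, ← hA, hΨstar]; exact hTΨ _
      · rw [← star_star x, ← hg, hLstar]; exact hTL _
    | algebraMap r =>
      rw [Algebra.algebraMap_eq_smul_one]
      refine Submodule.smul_mem _ _ (Submodule.subset_span ?_)
      rw [← hL1]; exact hTL _
    | add x y _ _ hx hy => exact Submodule.add_mem _ hx hy
    | mul x y _ _ hx hy =>
      have h := Submodule.mul_mem_mul hx hy
      rw [Submodule.span_mul_span] at h
      refine Submodule.span_mono ?_ h
      rintro _ ⟨a, ha, b, hb, rfl⟩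
      exact hTmul a ha b hb
  have hbase : ∀ x ∈ T, ∀ y ∈ T, hadamard ρ V F x y ∈ S0 := by
    rintro _ ⟨⟨A, g⟩, rfl⟩ _ ⟨⟨B, h⟩, rfl⟩
    by_cases hgh : g = h
    · subst hgh
      have : hadamard ρ V F (Ψ A * L g) (Ψ B * L g) = Ψ (A * B) * L g := by
        ext1 ξ
        apply lp.ext
        funext k
        rw [hd_apply ρ hρ V hV F]
        simp only [mul_apply_eq_comp, hL, hΨ, hF, hρ, hV, map_mul]
        simp
      show hadamard ρ V F (Ψ A * L g) (Ψ B * L g) ∈ S0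
      rw [this]
      exact mul_mem (hΨmem _) (hLmem _)
    · have : hadamard ρ V F (Ψ A * L g) (Ψ B * L h) = 0 := by
        ext1 ξ
        apply lp.ext
        funext k
        rw [hd_apply ρ hρ V hV F]
        simp only [mul_apply_eq_comp, hL, hΨ, hF, hρ, hV, map_mul]
        have : h⁻¹ * k ≠ g⁻¹ * k := by
          intro e; exact hgh (inv_injective (mul_right_cancel e)).symm
        simp [this]
      show hadamard ρ V F (Ψ A * L g) (Ψ B * L h) ∈ S0
      rw [this]
      exact zero_mem _
  have hspan : ∀ x ∈ Submodule.span ℂ T, ∀ y ∈ Submodule.span ℂ T, hadamard ρ V F x y ∈ S0 := by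
    intro x hx y hy
    induction hx, hy using Submodule.span_induction₂ with
    | mem_mem x y hx hy => exact hbase x hx y hy
    | zero_left y hy =>
      have : hadamard ρ V F 0 y = 0 := by simp [hadamard, hR]
      rw [this]; exact zero_mem _
    | zero_right x hx =>
      have : hadamard ρ V F x 0 = 0 := by simp [hadamard, hR]
      rw [this]; exact zero_mem _
    | add_left x y z hx hy hz h1 h2 =>
      have : hadamard ρ V F (x + y) z = hadamard ρ V F x z + hadamard ρ V F y z := by
        simp [hadamard, hR, add_comp, comp_add]
      rw [this]; exact add_mem h1 h2
    | add_right x y z hx hy hz h1 h2 =>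
      have : hadamard ρ V F x (y + z) = hadamard ρ V F x y + hadamard ρ V F x z := by
        simp [hadamard, hR, add_comp, comp_add]
      rw [this]; exact add_mem h1 h2
    | smul_left r x y hx hy h1 =>
      have : hadamard ρ V F (r • x) y = r • hadamard ρ V F x y := by
        simp [hadamard, hR, smul_comp, comp_smul]
      rw [this]; exact SMulMemClass.smul_mem r h1
    | smul_right r x y hx hy h1 =>
      have : hadamard ρ V F x (r • y) = r • hadamard ρ V F x y := by
        simp [hadamard, hR, smul_comp, comp_smul]
      rw [this]; exact SMulMemClass.smul_mem r h1
  intro X hX Y hY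
  rw [h𝒞, StarSubalgebra.topologicalClosure_coe] at hX hY ⊢
  exact map_mem_closure₂ hcont hX hY fun x hx y hy => hspan x (hsub x hx) y (hsub y hy)
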